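/- arXiv:math/0110204 — 2 statements merged into one kernel-verified Lean document; each statement's English description precedes it below -/
import Mathlib

section
/- There is no injective group homomorphism from the alternating group on 4 letters into GL(2, ℂ). (This is the group-theoretic content of the paper's Lemma that the tetrahedral subgroup K = A₄ of PGL(2, ℂ) is of non-splitting type.) -/
/-!
In `A₄` the double transpositions `a`, `b` and `a * b` are conjugate. Under a homomorphism to
`GL₂(R)`, conjugacy of `b` and `a * b` forces `det a = 1`, so the images `A`, `B` of `a`, `b` have
square one, determinant one and a common trace `t`. Cayley–Hamilton then reads `t • A = 2 = t • B`,
whence `2 • A = (t • B) * A = B * (t • A) = 2 • B`, and `A = B` as soon as `2` is regular in `R`.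
-/

open Matrix

theorem map_eq_one_of_isConj_mul {G H : Type*} [Monoid G] [CancelCommMonoid H] (φ : G →* H)
    {a b : G} (h : IsConj b (a * b)) : φ a = 1 := by
  have map_eq : φ b = φ a * φ b := by
    simpa only [map_mul] using isConj_iff_eq.mp (φ.map_isConj h)
  exact right_eq_mul.mp map_eq

section

variable {n R : Type*} [Fintype n] [DecidableEq n] [CommRing R]

theorem trace_eq_of_isConj {g h : GL n R} (hgh : IsConj g h) : g.val.trace = h.val.trace := by
  obtain ⟨c, rfl⟩ := isConj_iff.mp hgh
  exact (trace_units_conj c g.val).symm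

theorem sq_eq_trace_smul_sub_det_smul_one (hn : Fintype.card n = 2) (M : Matrix n n R) :
    M ^ 2 = M.trace • M - M.det • 1 := by
  nontriviality R
  have cayley_hamilton := M.aeval_self_charpoly
  simp only [M.charpoly_of_card_eq_two hn, map_add, map_sub, map_mul, map_pow, Polynomial.aeval_X,
    Polynomial.aeval_C, Algebra.algebraMap_eq_smul_one, smul_one_mul] at cayley_hamilton
  rw [← sub_eq_zero, ← cayley_hamilton]
  abel

theorem trace_smul_eq_two_smul_one (hn : Fintype.card n = 2) {M : Matrix n n R}
    (hM : M ^ 2 = 1) (hdet : M.det = 1) : M.trace • M = (2 : R) • 1 := by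
  have cayley_hamilton := sq_eq_trace_smul_sub_det_smul_one hn M
  rw [hM, hdet, one_smul, eq_sub_iff_add_eq] at cayley_hamilton
  rw [← cayley_hamilton, two_smul]

theorem eq_of_sq_eq_one_of_det_eq_one_of_trace_eq (hn : Fintype.card n = 2)
    (h2 : IsRegular (2 : R)) {M N : Matrix n n R} (hM : M ^ 2 = 1) (hN : N ^ 2 = 1)
    (hMdet : M.det = 1) (hNdet : N.det = 1) (htrace : M.trace = N.trace) : M = N := by
  refine h2.left.isSMulRegular.matrix ?_
  calc (2 : R) • M = (N.trace • N) * M := by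
        rw [trace_smul_eq_two_smul_one hn hN hNdet, smul_one_mul]
    _ = N * (M.trace • M) := by rw [htrace, smul_mul_assoc, mul_smul_comm]
    _ = (2 : R) • N := by
        rw [trace_smul_eq_two_smul_one hn hM hMdet, mul_smul_comm, mul_one]

theorem eq_of_sq_eq_one_of_isConj_of_isConj_mul (hn : Fintype.card n = 2)
    (h2 : IsRegular (2 : R)) {g h : GL n R} (hg : g ^ 2 = 1) (hgh : IsConj g h)
    (hmul : IsConj h (g * h)) : g = h := by
  have hh : h ^ 2 = 1 := by
    simpa only [hg, isConj_one_right] using hgh.pow 2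
  have hgdet : GeneralLinearGroup.det g = 1 := map_eq_one_of_isConj_mul _ hmul
  have hhdet : GeneralLinearGroup.det h = 1 :=
    (isConj_iff_eq.mp (GeneralLinearGroup.det.map_isConj hgh)).symm.trans hgdet
  exact Units.ext <| eq_of_sq_eq_one_of_det_eq_one_of_trace_eq hn h2
    (congrArg Units.val hg) (congrArg Units.val hh)
    (congrArg Units.val hgdet) (congrArg Units.val hhdet) (trace_eq_of_isConj hgh)

end

theorem exists_ne_sq_eq_one_isConj_isConj_mul_alternatingGroup_fin_four :
    ∃ a b : alternatingGroup (Fin 4), a ≠ b ∧ a ^ 2 = 1 ∧ IsConj a b ∧ IsConj b (a * b) := by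
  let a : alternatingGroup (Fin 4) :=
    ⟨c[0, 1] * c[2, 3], Equiv.Perm.mem_alternatingGroup.mpr (by decide)⟩
  let b : alternatingGroup (Fin 4) :=
    ⟨c[0, 2] * c[1, 3], Equiv.Perm.mem_alternatingGroup.mpr (by decide)⟩
  let c : alternatingGroup (Fin 4) :=
    ⟨c[1, 2, 3], Equiv.Perm.mem_alternatingGroup.mpr (by decide)⟩
  have conj_a : c * a * c⁻¹ = b := by decide
  have conj_b : c * b * c⁻¹ = a * b := by decide
  exact ⟨a, b, by decide, by decide, isConj_iff.mpr ⟨c, conj_a⟩, isConj_iff.mpr ⟨c, conj_b⟩⟩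

theorem no_injective_hom_A4_to_GL2C_general {n R : Type*} [Fintype n] [DecidableEq n] [CommRing R]
    (hn : Fintype.card n = 2) (h2 : IsRegular (2 : R)) :
    ¬ ∃ f : alternatingGroup (Fin 4) →* GL n R, Function.Injective f := by
  rintro ⟨f, hf⟩
  obtain ⟨a, b, hab, ha, hconj, hmul⟩ :=
    exists_ne_sq_eq_one_isConj_isConj_mul_alternatingGroup_fin_four
  have hfa : f a ^ 2 = 1 := by rw [← map_pow, ha, map_one]
  have hfmul : IsConj (f b) (f a * f b) := by simpa only [map_mul] using f.map_isConj hmul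
  exact hab <| hf <|
    eq_of_sq_eq_one_of_isConj_of_isConj_mul hn h2 hfa (f.map_isConj hconj) hfmul

/-- There is no injective group homomorphism from the alternating group on 4 letters
into `GL(2, ℂ)`. -/
theorem no_injective_hom_A4_to_GL2C :
    ¬ ∃ f : (alternatingGroup (Fin 4)) →* GL (Fin 2) ℂ, Function.Injective f :=
  no_injective_hom_A4_to_GL2C_general (Fintype.card_fin 2) (IsRegular.of_ne_zero two_ne_zero)
end

section
/- Let K be a finite subgroup of PGL(2, ℂ), let β be a nonzero homogeneous polynomial of degree 6 in x₀, x₁ over ℂ whose zero divisor is K-invariant (i.e., for every g ∈ GL(2, ℂ) with π(g) ∈ K, β∘g is a nonzero scalar multiple of β), and let G be a subgroup of GL(2, ℂ) with π(G) = K, kernel of π restricted to G equal to {Id, −Id}, and β∘g = (det g)²·β for all g ∈ G. Then G contains a subgroup H such that π restricted to H is an isomorphism onto K if and only if there exist (i) a group homomorphism ε : K → GL(2, ℂ) with π∘ε equal to the inclusion of K into PGL(2, ℂ), and (ii) a group homomorphism ν : K → ℂ* such that β∘ε(k) = ν(k)²·β for every k ∈ K. (Proposition: the pair (K, β) yields a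 splitted extendable group G if and only if there is a lifting ε of K and a square root ν of the character μ associated to ε and β.) -/
/-- `PGL(2, ℂ)`: the quotient of `GL(2, ℂ)` by its center (the nonzero scalar matrices). -/
abbrev PGL2C := GL (Fin 2) ℂ ⧸ Subgroup.center (GL (Fin 2) ℂ)

/-- The canonical projection `π : GL(2, ℂ) → PGL(2, ℂ)`. -/
def projGL2 : GL (Fin 2) ℂ →* PGL2C := QuotientGroup.mk' (Subgroup.center (GL (Fin 2) ℂ))

/-- `β ∘ g`: the polynomial obtained from `β` by substituting
`(g₀₀x₀ + g₀₁x₁, g₁₀x₀ + g₁₁x₁)` for `(x₀, x₁)`. -/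
noncomputable def polyComp (g : GL (Fin 2) ℂ) (β : MvPolynomial (Fin 2) ℂ) :
    MvPolynomial (Fin 2) ℂ :=
  MvPolynomial.aeval
    (fun i => ∑ j, MvPolynomial.C ((g : Matrix (Fin 2) (Fin 2) ℂ) i j) * MvPolynomial.X j) β

/-!
The group `G` is determined by its image `K`: two elements with the same class differ by a scalar
`u`, and comparing degree `6` with the weight `2 · 2` of `det²` shows that the equation
`β ∘ g = (det g)² · β` fixes `u` up to sign, while `-1 ∈ G`. Hence a splitting of `G → K` is the
same as a lifting `ε` of `K` with `β ∘ ε = (det ε)² · β`. The determinant of such an `ε` is a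
square root of its character; conversely, if `β ∘ ε = ν² · β`, then twisting `ε` by the character
`det ε / ν` produces such a lifting. For `n × n` matrices and `detᵐ` in place of `det²`, the same
argument applies to forms of degree `m (n + 1)`, with the `m`-th roots of unity in place of `±1`.
-/

open Matrix hiding scalar
open MvPolynomial
open Matrix.GeneralLinearGroup (scalar)
open scoped MatrixGroups

section Sections

variable {Γ Q : Type*} [Group Γ] [Group Q]

theorem exists_section_of_map_eq {p : Γ →* Q} {H : Subgroup Γ} {K : Subgroup Q}
    (hmap : H.map p = K) (hinj : ∀ h ∈ H, p h = 1 → h = 1) :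
    ∃ s : K →* Γ, (∀ k, p (s k) = k) ∧ ∀ k, s k ∈ H := by
  subst hmap
  have hbij : Function.Bijective (p.subgroupMap H) := by
    refine ⟨(injective_iff_map_eq_one _).2 fun h hh ↦ ?_, p.subgroupMap_surjective H⟩
    exact Subtype.ext (hinj h h.2 (congrArg Subtype.val hh))
  let e : H ≃* H.map p := MulEquiv.ofBijective (p.subgroupMap H) hbij
  exact ⟨H.subtype.comp e.symm.toMonoidHom,
    fun k ↦ congrArg Subtype.val (e.apply_symm_apply k), fun k ↦ (e.symm k).2⟩

theorem map_range_of_section {p : Γ →* Q} {K : Subgroup Q} {s : K →* Γ}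
    (hs : ∀ k, p (s k) = k) : s.range.map p = K := by
  have hcomp : p.comp s = K.subtype := MonoidHom.ext hs
  rw [MonoidHom.map_range, hcomp, K.range_subtype]

theorem exists_complement_iff_exists_section (p : Γ →* Q) (G : Subgroup Γ) (K : Subgroup Q) :
    (∃ H ≤ G, H.map p = K ∧ ∀ h ∈ H, p h = 1 → h = 1) ↔
      ∃ s : K →* Γ, (∀ k, p (s k) = k) ∧ ∀ k, s k ∈ G := by
  constructor
  · rintro ⟨H, hHG, hmap, hinj⟩
    obtain ⟨s, hs, hsH⟩ := exists_section_of_map_eq hmap hinj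
    exact ⟨s, hs, fun k ↦ hHG (hsH k)⟩
  · rintro ⟨s, hs, hsG⟩
    refine ⟨s.range, ?_, map_range_of_section hs, ?_⟩
    · rintro _ ⟨k, rfl⟩
      exact hsG k
    · rintro _ ⟨k, rfl⟩ hk
      have hk1 : k = 1 := Subtype.ext ((hs k).symm.trans hk)
      rw [hk1, map_one]

end Sections

theorem aeval_mul_left_of_isHomogeneous {σ R A : Type*} [CommSemiring R] [CommSemiring A]
    [Algebra R A] {φ : MvPolynomial σ R} {d : ℕ} (hφ : φ.IsHomogeneous d) (a : A) (f : σ → A) :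
    aeval (fun i ↦ a * f i) φ = a ^ d * aeval f φ := by
  rw [aeval_def, aeval_def, eval₂_eq, eval₂_eq, Finset.mul_sum]
  refine Finset.sum_congr rfl fun e he ↦ ?_
  have hdeg : d = ∑ i ∈ e.support, e i := hφ.degree_eq_sum_deg_support he
  rw [hdeg, ← Finset.prod_pow_eq_pow_sum]
  simp only [mul_pow, Finset.prod_mul_distrib]
  ring

theorem toMvPolynomial_smul {l n R : Type*} [Fintype n] [CommSemiring R] (a : R)
    (A : Matrix l n R) (i : l) : (a • A).toMvPolynomial i = C a * A.toMvPolynomial i := by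
  simp only [toMvPolynomial, Matrix.smul_apply, smul_eq_mul, Finset.mul_sum, C_mul_monomial]

theorem bind₁_toMvPolynomial_smul {l n R : Type*} [Fintype n] [CommSemiring R]
    {β : MvPolynomial l R} {d : ℕ} (hβ : β.IsHomogeneous d) (a : R) (A : Matrix l n R) :
    bind₁ (a • A).toMvPolynomial β = a ^ d • bind₁ A.toMvPolynomial β := by
  rw [funext (toMvPolynomial_smul a A), bind₁, aeval_mul_left_of_isHomogeneous hβ,
    smul_eq_C_mul, map_pow, bind₁]

section Scalar

variable {n R : Type*} [Fintype n] [DecidableEq n] [CommRing R]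

theorem bind₁_toMvPolynomial_scalar_mul {β : MvPolynomial n R} {d : ℕ} (hβ : β.IsHomogeneous d)
    (u : Rˣ) (g : GL n R) :
    bind₁ (scalar n u * g).val.toMvPolynomial β = u ^ d • bind₁ g.val.toMvPolynomial β := by
  have hval : (scalar n u * g).val = (u : R) • g.val := (smul_eq_diagonal_mul g.val (u : R)).symm
  rw [hval, bind₁_toMvPolynomial_smul hβ, Units.smul_def, Units.val_pow_eq_pow_val]

theorem det_scalar_mul (u : Rˣ) (g : GL n R) :
    (scalar n u * g).det = u ^ Fintype.card n * g.det := by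
  rw [map_mul, GeneralLinearGroup.det_scalar]

/-- The pointwise product of a representation with a character, the latter acting by scalars. -/
def scalarTwist {M : Type*} [MulOneClass M] (c : M →* Rˣ) (ε : M →* GL n R) : M →* GL n R :=
  (((scalar n).comp c).noncommCoprod ε fun x y ↦
    GeneralLinearGroup.scalar_commute (c x) (ε y)).comp ((MonoidHom.id M).prod (MonoidHom.id M))

theorem scalarTwist_apply {M : Type*} [MulOneClass M] (c : M →* Rˣ) (ε : M →* GL n R) (x : M) :
    scalarTwist c ε x = scalar n (c x) * ε x :=
  rfl

theorem mk_scalarTwist {M : Type*} [MulOneClass M] (c : M →* Rˣ) (ε : M →* GL n R) (x : M) :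
    ProjGenLinGroup.mk (scalarTwist c ε x) = ProjGenLinGroup.mk (ε x) := by
  rw [scalarTwist_apply, map_mul, ProjGenLinGroup.mk_scalar, one_mul]

theorem scalar_mem_of_sq_eq_one [NoZeroDivisors R] {G : Subgroup (GL n R)} (hneg : -1 ∈ G)
    {u : Rˣ} (hu : u ^ 2 = 1) : scalar n u ∈ G := by
  rcases Units.eq_or_eq_neg_of_sq_eq_sq u 1 (hu.trans (one_pow 2).symm) with rfl | rfl
  · rw [map_one]
    exact G.one_mem
  · have hscalar : scalar n (-1 : Rˣ) = -1 := Units.ext (by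
      simp only [GeneralLinearGroup.coe_scalar, Units.val_neg, Units.val_one, map_neg, map_one])
    rwa [hscalar]

end Scalar

section SemiInvariant

variable {n R : Type*} [Fintype n] [DecidableEq n] [CommRing R]
  {m : ℕ} {β : MvPolynomial n R}

theorem bind₁_toMvPolynomial_scalar_det_div_mul (hβ : β.IsHomogeneous (m * (Fintype.card n + 1)))
    {g : GL n R} {v : Rˣ} (hg : bind₁ g.val.toMvPolynomial β = v ^ m • β) :
    bind₁ (scalar n (g.det / v) * g).val.toMvPolynomial β =
      (scalar n (g.det / v) * g).det ^ m • β := by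
  rw [bind₁_toMvPolynomial_scalar_mul hβ, hg, smul_smul, det_scalar_mul]
  congr 1
  calc (g.det / v) ^ (m * (Fintype.card n + 1)) * v ^ m
      = ((g.det / v) ^ Fintype.card n * (g.det / v * v)) ^ m := by
        rw [mul_comm m, pow_mul, pow_succ, ← mul_pow, mul_assoc]
    _ = ((g.det / v) ^ Fintype.card n * g.det) ^ m := by rw [div_mul_cancel]

variable [IsDomain R]

theorem pow_eq_one_of_bind₁_scalar_mul (hβ0 : β ≠ 0)
    (hβ : β.IsHomogeneous (m * (Fintype.card n + 1))) {u : Rˣ} {g : GL n R}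
    (hg : bind₁ g.val.toMvPolynomial β = g.det ^ m • β)
    (hug : bind₁ (scalar n u * g).val.toMvPolynomial β = (scalar n u * g).det ^ m • β) :
    u ^ m = 1 := by
  rw [bind₁_toMvPolynomial_scalar_mul hβ, hg, smul_smul, det_scalar_mul] at hug
  have hunits : u ^ (m * (Fintype.card n + 1)) * g.det ^ m =
      (u ^ Fintype.card n * g.det) ^ m :=
    Units.ext (smul_left_injective R hβ0 hug)
  have hfactor : u ^ (m * (Fintype.card n + 1)) * g.det ^ m =
      u ^ m * (u ^ Fintype.card n * g.det) ^ m := by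
    rw [mul_comm m, pow_mul, pow_succ', ← mul_pow, ← mul_pow, mul_assoc]
  exact mul_eq_right.1 (hfactor.symm.trans hunits)

theorem mem_iff_mk_mem_map_and_bind₁_eq (hβ0 : β ≠ 0)
    (hβ : β.IsHomogeneous (m * (Fintype.card n + 1))) {G : Subgroup (GL n R)}
    (hroots : ∀ u : Rˣ, u ^ m = 1 → scalar n u ∈ G)
    (hdet : ∀ g ∈ G, bind₁ g.val.toMvPolynomial β = g.det ^ m • β) (g : GL n R) :
    g ∈ G ↔ ProjGenLinGroup.mk g ∈ G.map ProjGenLinGroup.mk ∧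
      bind₁ g.val.toMvPolynomial β = g.det ^ m • β := by
  refine ⟨fun hg ↦ ⟨Subgroup.mem_map_of_mem _ hg, hdet g hg⟩, ?_⟩
  rintro ⟨⟨g', hg', hmk⟩, hg⟩
  obtain ⟨u, rfl⟩ := ProjGenLinGroup.mk_eq_mk_iff.1 hmk
  rw [← GeneralLinearGroup.scalar_commute] at hg ⊢
  exact G.mul_mem (hroots u (pow_eq_one_of_bind₁_scalar_mul hβ0 hβ (hdet g' hg') hg)) hg'

theorem splitting_iff_lifting_and_sqrt_general (K : Subgroup PGL(n, R)) (hβ0 : β ≠ 0)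
    (hβ : β.IsHomogeneous (m * (Fintype.card n + 1))) (G : Subgroup (GL n R))
    (hmap : G.map ProjGenLinGroup.mk = K) (hroots : ∀ u : Rˣ, u ^ m = 1 → scalar n u ∈ G)
    (hdet : ∀ g ∈ G, bind₁ g.val.toMvPolynomial β = g.det ^ m • β) :
    (∃ H ≤ G, H.map ProjGenLinGroup.mk = K ∧ ∀ h ∈ H, ProjGenLinGroup.mk h = 1 → h = 1) ↔
      ∃ ε : K →* GL n R, (∀ k, ProjGenLinGroup.mk (ε k) = k) ∧
        ∃ ν : K →* Rˣ, ∀ k, bind₁ (ε k).val.toMvPolynomial β = ν k ^ m • β := by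
  rw [exists_complement_iff_exists_section]
  constructor
  · rintro ⟨ε, hε, hεG⟩
    exact ⟨ε, hε, GeneralLinearGroup.det.comp ε, fun k ↦ hdet (ε k) (hεG k)⟩
  · rintro ⟨ε, hε, ν, hν⟩
    let φ : K →* GL n R := scalarTwist (GeneralLinearGroup.det.comp ε / ν) ε
    have hφ : ∀ k, ProjGenLinGroup.mk (φ k) = k := fun k ↦ (mk_scalarTwist _ ε k).trans (hε k)
    refine ⟨φ, hφ, fun k ↦ (mem_iff_mk_mem_map_and_bind₁_eq hβ0 hβ hroots hdet (φ k)).2 ⟨?_, ?_⟩⟩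
    · rw [hφ, hmap]
      exact k.2
    · exact bind₁_toMvPolynomial_scalar_det_div_mul hβ (hν k)

end SemiInvariant

theorem polyComp_eq_bind₁ (g : GL (Fin 2) ℂ) (β : MvPolynomial (Fin 2) ℂ) :
    polyComp g β = bind₁ g.val.toMvPolynomial β := by
  simp only [polyComp, bind₁, C_mul_X_eq_monomial]
  rfl

/-- For `K` a finite subgroup of `PGL(2, ℂ)`, `β` a nonzero homogeneous sextic with
`K`-invariant zero divisor, and `G` the associated extendable group, `G` contains a
subgroup `H` mapping isomorphically onto `K` if and only if there is a lifting
`ε : K → GL(2, ℂ)` of the inclusion and a character `ν : K → ℂ*` with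
`β ∘ ε(k) = ν(k)² · β` for all `k ∈ K`. -/
theorem splitting_iff_lifting_and_sqrt (K : Subgroup PGL2C) (hKfin : Finite K)
    (β : MvPolynomial (Fin 2) ℂ) (hβ0 : β ≠ 0) (hβh : β.IsHomogeneous 6)
    (hinv : ∀ g : GL (Fin 2) ℂ, projGL2 g ∈ K →
      ∃ c : ℂ, c ≠ 0 ∧ polyComp g β = c • β)
    (G : Subgroup (GL (Fin 2) ℂ))
    (hmap : Subgroup.map projGL2 G = K)
    (hneg : (-1 : GL (Fin 2) ℂ) ∈ G)
    (hker : ∀ g ∈ G, projGL2 g = 1 → g = 1 ∨ g = -1)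
    (hdet : ∀ g ∈ G, polyComp g β = ((g : Matrix (Fin 2) (Fin 2) ℂ).det) ^ 2 • β) :
    (∃ H : Subgroup (GL (Fin 2) ℂ), H ≤ G ∧ Subgroup.map projGL2 H = K ∧
        ∀ h ∈ H, projGL2 h = 1 → h = 1) ↔
    (∃ ε : K →* GL (Fin 2) ℂ, (∀ k : K, projGL2 (ε k) = (k : PGL2C)) ∧
        ∃ ν : K →* ℂˣ, ∀ k : K,
          polyComp (ε k) β = ((ν k : ℂ)) ^ 2 • β) := by
  simp only [polyComp_eq_bind₁] at hdet ⊢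
  exact splitting_iff_lifting_and_sqrt_general K hβ0 hβh G hmap
    (fun _ hu ↦ scalar_mem_of_sq_eq_one hneg hu) hdet
end
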